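/- Let u : ℝ → ℝ be C⁴ near a point x₀ with u'(x₀) ≠ 0, and let A(Δx) denote the three-point Gaussian-RBF reconstruction of u(x₀) from the cell averages over [x₀−2Δx, x₀−Δx], [x₀−Δx, x₀], [x₀, x₀+Δx] (constructed via the primitive function as in the paper), with shape parameter λ. Then A(Δx) = u(x₀) + Δx³(λ²u'(x₀) + u'''(x₀)/12) + O(Δx⁴); consequently, choosing λ² = −u'''(x₀)/(12u'(x₀)) (when this quantity is nonnegative) yields A(Δx) = u(x₀) + O(Δx⁴). -/

import Mathlib

open Real intervalIntegral

set_option maxHeartbeats 1000000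

/-- Fourth-order Taylor expansion of the primitive based at `x₀`. -/
lemma prim_expand (u : ℝ → ℝ) (x₀ ε : ℝ) (hε : 0 < ε)
    (hu : ContDiffOn ℝ 4 u (Metric.ball x₀ ε)) :
    ∃ K > 0, ∃ δ > 0, ∃ c : ℝ, ∀ y : ℝ, |y| < δ →
      IntervalIntegrable u MeasureTheory.volume x₀ (x₀ + y) ∧
      |(∫ ξ in x₀..(x₀ + y), u ξ) - (u x₀ * y + deriv u x₀ * y ^ 2 / 2 + c * y ^ 3 / 6
        + iteratedDeriv 3 u x₀ * y ^ 4 / 24)| ≤ K * |y| ^ 5 := by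
  have hmem : x₀ ∈ Metric.ball x₀ ε := Metric.mem_ball_self hε
  have h1 := taylor_isLittleO (n := 4) (convex_ball x₀ ε) hmem hu
  rw [Metric.isOpen_ball.nhdsWithin_eq hmem] at h1
  have h2 := h1.bound (c := 1) one_pos
  rw [Metric.eventually_nhds_iff] at h2
  obtain ⟨δ₀, hδ₀, h2⟩ := h2
  set e := iteratedDeriv 4 u x₀ with he
  set c := iteratedDeriv 2 u x₀ with hc
  set d := iteratedDeriv 3 u x₀ with hd
  have hi : ∀ n, iteratedDerivWithin n u (Metric.ball x₀ ε) x₀ = iteratedDeriv n u x₀ :=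
    fun n => iteratedDerivWithin_of_isOpen Metric.isOpen_ball hmem
  have h3 : ∀ x, |x - x₀| < δ₀ →
      |u x - (u x₀ + deriv u x₀ * (x - x₀) + c * (x - x₀) ^ 2 / 2 + d * (x - x₀) ^ 3 / 6)|
        ≤ (1 + |e| / 24) * |x - x₀| ^ 4 := by
    intro x hx
    have h4 := h2 (y := x) (by rwa [Real.dist_eq])
    simp only [taylorWithinEval_succ, taylor_within_zero_eval, hi, smul_eq_mul,
      Real.norm_eq_abs, abs_pow, one_mul] at h4
    rw [show iteratedDeriv (0 + 1) u x₀ = deriv u x₀ by simp [iteratedDeriv_one]] at h4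
    norm_num [Nat.factorial] at h4
    rw [← hc, ← hd, ← he] at h4
    have h5 : |e / 24 * (x - x₀) ^ 4| = |e| / 24 * |x - x₀| ^ 4 := by
      rw [abs_mul, abs_div, abs_pow]; norm_num
    have h6 := abs_le.1 h4
    have h7 := abs_le.1 h5.le
    rw [abs_le]
    constructor <;> nlinarith
  refine ⟨1 + |e| / 24, by positivity, min δ₀ ε, lt_min hδ₀ hε, c, fun y hy => ?_⟩
  have hy1 : |y| < δ₀ := lt_of_lt_of_le hy (min_le_left _ _)
  have hy2 : |y| < ε := lt_of_lt_of_le hy (min_le_right _ _)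
  have hsub : ∀ x ∈ Set.uIcc x₀ (x₀ + y), |x - x₀| ≤ |y| := by
    intro x hx
    have := Set.abs_sub_left_of_mem_uIcc hx
    simpa using this
  have hint : IntervalIntegrable u MeasureTheory.volume x₀ (x₀ + y) := by
    apply ContinuousOn.intervalIntegrable
    apply hu.continuousOn.mono
    intro x hx
    rw [Metric.mem_ball, Real.dist_eq]
    exact lt_of_le_of_lt (hsub x hx) hy2
  refine ⟨hint, ?_⟩
  have hpoly : ∫ ξ in x₀..(x₀ + y), (u x₀ + deriv u x₀ * (ξ - x₀) + c * (ξ - x₀) ^ 2 / 2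
      + d * (ξ - x₀) ^ 3 / 6) = u x₀ * y + deriv u x₀ * y ^ 2 / 2 + c * y ^ 3 / 6
        + d * y ^ 4 / 24 := by
    rw [integral_eq_sub_of_hasDerivAt (f := fun ξ => u x₀ * (ξ - x₀)
      + deriv u x₀ * (ξ - x₀) ^ 2 / 2 + c * (ξ - x₀) ^ 3 / 6 + d * (ξ - x₀) ^ 4 / 24)]
    · ring
    · intro x _
      have hb : HasDerivAt (fun ξ : ℝ => ξ - x₀) 1 x := (hasDerivAt_id x).sub_const x₀
      have := (((hb.const_mul (u x₀)).add (((hb.pow 2).const_mul (deriv u x₀)).div_const 2)).add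
        (((hb.pow 3).const_mul c).div_const 6)).add (((hb.pow 4).const_mul d).div_const 24)
      refine HasDerivAt.congr_deriv (f := fun ξ => u x₀ * (ξ - x₀)
        + deriv u x₀ * (ξ - x₀) ^ 2 / 2 + c * (ξ - x₀) ^ 3 / 6 + d * (ξ - x₀) ^ 4 / 24) this ?_
      push_cast
      ring
    · apply Continuous.intervalIntegrable
      fun_prop
  rw [← hpoly, ← integral_sub hint (by apply Continuous.intervalIntegrable; fun_prop)]
  have := norm_integral_le_of_norm_le_const (a := x₀) (b := x₀ + y)
    (C := (1 + |e| / 24) * |y| ^ 4) (f := fun ξ => u ξ - (u x₀ + deriv u x₀ * (ξ - x₀)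
      + c * (ξ - x₀) ^ 2 / 2 + d * (ξ - x₀) ^ 3 / 6)) (by
    intro x hx
    have hx' := hsub x (Set.uIoc_subset_uIcc hx)
    refine (h3 x (lt_of_le_of_lt hx' hy1)).trans ?_
    gcongr)
  rw [Real.norm_eq_abs] at this
  refine this.trans (le_of_eq ?_)
  rw [add_sub_cancel_left]; ring

lemma bern_bound (x : ℝ) (h0 : 0 < x) (h1 : x ≤ 1) :
    |x / (exp x - 1) - (1 - x / 2)| ≤ x ^ 2 := by
  have hb := Real.exp_bound (x := x) (by rw [abs_of_pos h0]; exact h1) (n := 3) (by norm_num)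
  rw [abs_of_pos h0] at hb
  norm_num [Finset.sum_range_succ, Nat.factorial] at hb
  have hx1 : x ≤ exp x - 1 := by linarith [Real.add_one_le_exp x]
  have hpos : 0 < exp x - 1 := by linarith
  obtain ⟨r, hr⟩ : ∃ r, exp x = 1 + x + x ^ 2 / 2 + r := ⟨_, (by ring : _ = 1 + x + x ^ 2 / 2 + (exp x - (1 + x + x ^ 2 / 2)))⟩
  rw [hr] at hb
  have hb' : |r| ≤ x ^ 3 * (2 / 9) := by
    convert hb using 2
    ring
  have : x / (exp x - 1) - (1 - x / 2) = (x - (1 - x / 2) * (exp x - 1)) / (exp x - 1) := by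
    field_simp
  rw [this, abs_div, abs_of_pos hpos, div_le_iff₀ hpos]
  have h3 : |x - (1 - x / 2) * (exp x - 1)| ≤ x ^ 3 := by
    rw [hr]
    have : x - (1 - x / 2) * (1 + x + x ^ 2 / 2 + r - 1) = x ^ 3 / 4 - (1 - x / 2) * r := by ring
    rw [this]
    have h4 : |(1 - x / 2) * r| ≤ 1 * |r| := by
      rw [abs_mul]
      gcongr
      rw [abs_le]; constructor <;> linarith
    have h5 := abs_sub (x ^ 3 / 4) ((1 - x / 2) * r)
    have h6 : 0 < x ^ 3 := by positivity
    rw [abs_of_pos (show 0 < x ^ 3 / 4 by positivity)] at h5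
    linarith
  refine h3.trans ?_
  nlinarith [sq_nonneg x]

lemma prod_bound (x s t : ℝ) (h0 : 0 < t) (ht : t ≤ 1 / 6) (hx : x = 2 * t ∨ x = 6 * t)
    (hs : s = t ∨ s = 5 * t) :
    |x / (exp x - 1) * exp s - (1 + (s - x / 2))| ≤ 400 * t ^ 2 := by
  have hx0 : 0 < x := by rcases hx with rfl | rfl <;> linarith
  have hx6 : x ≤ 6 * t := by rcases hx with rfl | rfl <;> linarith
  have hs0 : 0 < s := by rcases hs with rfl | rfl <;> linarith
  have hs5 : s ≤ 5 * t := by rcases hs with rfl | rfl <;> linarith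
  have hB := bern_bound x hx0 (by linarith)
  have hE := Real.abs_exp_sub_one_sub_id_le (x := s) (by rw [abs_of_pos hs0]; linarith)
  obtain ⟨r, hr⟩ : ∃ r, x / (exp x - 1) = 1 - x / 2 + r := ⟨_, (by ring : _ = 1 - x / 2 + (x / (exp x - 1) - (1 - x / 2)))⟩
  obtain ⟨q, hq⟩ : ∃ q, exp s = 1 + s + q := ⟨_, (by ring : _ = 1 + s + (exp s - 1 - s))⟩
  rw [hr] at hB ⊢
  rw [hq] at hE ⊢
  have hB' : |r| ≤ 36 * t ^ 2 := by
    have : x ^ 2 ≤ (6 * t) ^ 2 := by gcongr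
    have e : 1 - x / 2 + r - (1 - x / 2) = r := by ring
    rw [e] at hB; nlinarith
  have hE' : |q| ≤ 25 * t ^ 2 := by
    have : s ^ 2 ≤ (5 * t) ^ 2 := by gcongr
    have e : 1 + s + q - 1 - s = q := by ring
    rw [e] at hE; nlinarith
  have e : (1 - x / 2 + r) * (1 + s + q) - (1 + (s - x / 2))
    = -(x * s / 2) + (1 - x / 2) * q + r * (1 + s) + r * q := by ring
  rw [e]
  have a1 : |-(x * s / 2)| ≤ 15 * t ^ 2 := by
    rw [abs_neg, abs_of_pos (by positivity)]
    have : x * s ≤ (6 * t) * (5 * t) := by gcongr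
    nlinarith
  have a2 : |(1 - x / 2) * q| ≤ 1 * (25 * t ^ 2) := by
    rw [abs_mul]; gcongr
    rw [abs_le]; constructor <;> linarith
  have a3 : |r * (1 + s)| ≤ (36 * t ^ 2) * 2 := by
    rw [abs_mul]; gcongr
    rw [abs_le]; constructor <;> linarith
  have a4 : |r * q| ≤ (36 * t ^ 2) * 1 := by
    rw [abs_mul]; gcongr
    nlinarith
  have b1 := abs_add_le (-(x * s / 2) + (1 - x / 2) * q + r * (1 + s)) (r * q)
  have b2 := abs_add_le (-(x * s / 2) + (1 - x / 2) * q) (r * (1 + s))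
  have b3 := abs_add_le (-(x * s / 2)) ((1 - x / 2) * q)
  nlinarith [sq_nonneg t]

/-- Elimination of the coefficients from the collocation system. -/
lemma elim (t : ℝ) (ht : 0 < t) (α₀ α₁ α₂ α₃ V₁ V₂ V₃ : ℝ)
    (e0 : α₀ + α₁ * exp (-t) + α₂ * exp (-t * 4) + α₃ * exp (-t * 9) = 0)
    (e1 : α₀ * exp (-t) + α₁ + α₂ * exp (-t) + α₃ * exp (-t * 4) = V₁)
    (e2 : α₀ * exp (-t * 4) + α₁ * exp (-t) + α₂ + α₃ * exp (-t) = V₂)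
    (e3 : α₀ * exp (-t * 9) + α₁ * exp (-t * 4) + α₂ * exp (-t) + α₃ = V₃) :
    α₀ * (-4 * t * exp (-t * 4)) + α₁ * (-2 * t * exp (-t)) + α₃ * (2 * t * exp (-t))
      = -(2 * t / (exp (2 * t) - 1) * exp t) * V₁ + (4 * t / (exp (4 * t) - 1) / 2) * V₂
        + (6 * t / (exp (6 * t) - 1) * exp (5 * t) / 3) * V₃ := by
  obtain ⟨E, hE⟩ : ∃ E, exp t = E := ⟨_, rfl⟩
  have hE1 : 1 < E := by rw [← hE]; exact Real.one_lt_exp_iff.2 ht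
  have p2 : exp (2 * t) = E ^ 2 := by rw [← hE, ← Real.exp_nat_mul]; norm_num
  have p4 : exp (4 * t) = E ^ 4 := by rw [← hE, ← Real.exp_nat_mul]; norm_num
  have p5 : exp (5 * t) = E ^ 5 := by rw [← hE, ← Real.exp_nat_mul]; norm_num
  have p6 : exp (6 * t) = E ^ 6 := by rw [← hE, ← Real.exp_nat_mul]; norm_num
  have m1 : exp (-t) = 1 / E := by rw [Real.exp_neg, hE, one_div]
  have m4 : exp (-t * 4) = 1 / E ^ 4 := by
    rw [← p4, one_div, ← Real.exp_neg]; congr 1; ring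
  have m9 : exp (-t * 9) = 1 / E ^ 9 := by
    rw [← hE, ← Real.exp_nat_mul, one_div, ← Real.exp_neg]; congr 1; push_cast; ring
  rw [m1, m4, m9] at e0 e3
  rw [m1, m4] at e1 e2
  rw [p2, p4, p5, p6, m1, m4, hE, ← e1, ← e2, ← e3]
  have hα : α₀ = -(α₁ * (1 / E) + α₂ * (1 / E ^ 4) + α₃ * (1 / E ^ 9)) := by linarith
  rw [hα]
  have hE0 : E ≠ 0 := by linarith
  have n2 : E ^ 2 - 1 ≠ 0 := by have := one_lt_pow₀ hE1 (n := 2) (by norm_num); linarith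
  have n4 : E ^ 4 - 1 ≠ 0 := by have := one_lt_pow₀ hE1 (n := 4) (by norm_num); linarith
  have n6 : E ^ 6 - 1 ≠ 0 := by have := one_lt_pow₀ hE1 (n := 6) (by norm_num); linarith
  field_simp
  ring

/-- Assembly of the expansion. -/
lemma assemble (a b c d L h A V₁ V₂ V₃ D₁ D₂ D₃ G₁ G₂ G₃ K : ℝ) (h0 : 0 < h) (h1 : h ≤ 1)
    (hK : 0 < K)
    (hG1 : |G₁ - (a * (-h) + b * (-h) ^ 2 / 2 + c * (-h) ^ 3 / 6 + d * (-h) ^ 4 / 24)| ≤ K * h ^ 5)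
    (hG2 : |G₂ - (a * (-2 * h) + b * (-2 * h) ^ 2 / 2 + c * (-2 * h) ^ 3 / 6
      + d * (-2 * h) ^ 4 / 24)| ≤ K * h ^ 5)
    (hG3 : |G₃ - (a * h + b * h ^ 2 / 2 + c * h ^ 3 / 6 + d * h ^ 4 / 24)| ≤ K * h ^ 5)
    (hV1 : V₁ = G₁ - G₂) (hV2 : V₂ = -G₂) (hV3 : V₃ = G₃ - G₂)
    (hD1 : |D₁ - (-1)| ≤ 400 * (L * h ^ 2) ^ 2)
    (hD2 : |D₂ - (1 / 2 - L * h ^ 2)| ≤ 400 * (L * h ^ 2) ^ 2)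
    (hD3 : |D₃ - (1 / 3 + 2 / 3 * (L * h ^ 2))| ≤ 400 * (L * h ^ 2) ^ 2)
    (hA : h * A = D₁ * V₁ + D₂ * V₂ + D₃ * V₃) :
    |A - a - h ^ 3 * (L * b + d / 12)| ≤
      (10 * (1 + |L|) * K + |L| * (|c| + |d|)
        + 10000 * L ^ 2 * (|a| + |b| + |c| + |d| + K)) * h ^ 4 := by
  obtain ⟨r1, hr1⟩ : ∃ r, G₁ = (a * (-h) + b * (-h) ^ 2 / 2 + c * (-h) ^ 3 / 6 + d * (-h) ^ 4 / 24) + r := ⟨_, (add_sub_cancel _ _).symm⟩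
  obtain ⟨r2, hr2⟩ : ∃ r, G₂ = (a * (-2 * h) + b * (-2 * h) ^ 2 / 2 + c * (-2 * h) ^ 3 / 6
      + d * (-2 * h) ^ 4 / 24) + r := ⟨_, (add_sub_cancel _ _).symm⟩
  obtain ⟨r3, hr3⟩ : ∃ r, G₃ = (a * h + b * h ^ 2 / 2 + c * h ^ 3 / 6 + d * h ^ 4 / 24) + r := ⟨_, (add_sub_cancel _ _).symm⟩
  obtain ⟨e1, he1⟩ : ∃ r, D₁ = -1 + r := ⟨_, (add_sub_cancel _ _).symm⟩
  obtain ⟨e2, he2⟩ : ∃ r, D₂ = (1 / 2 - L * h ^ 2) + r := ⟨_, (add_sub_cancel _ _).symm⟩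
  obtain ⟨e3, he3⟩ : ∃ r, D₃ = (1 / 3 + 2 / 3 * (L * h ^ 2)) + r := ⟨_, (add_sub_cancel _ _).symm⟩
  rw [hr1, add_sub_cancel_left] at hG1
  rw [hr2, add_sub_cancel_left] at hG2
  rw [hr3, add_sub_cancel_left] at hG3
  rw [he1, add_sub_cancel_left] at hD1
  rw [he2, add_sub_cancel_left] at hD2
  rw [he3, add_sub_cancel_left] at hD3
  have p2 : h ^ 2 ≤ h := by nlinarith
  have p3 : h ^ 3 ≤ h := by nlinarith
  have p4 : h ^ 4 ≤ h := by nlinarith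
  have p5 : h ^ 5 ≤ h := by nlinarith
  set S := |a| + |b| + |c| + |d| + K with hS
  have hS0 : 0 ≤ S := by positivity
  -- size of the primitives
  have size : ∀ j r : ℝ, |j| ≤ 2 → |r| ≤ K * h ^ 5 →
      |a * (j * h) + b * (j * h) ^ 2 / 2 + c * (j * h) ^ 3 / 6 + d * (j * h) ^ 4 / 24 + r|
        ≤ 2 * S * h := by
    intro j r hj hr
    have j2 : |j| ^ 2 ≤ 2 ^ 2 := by gcongr
    have j3 : |j| ^ 3 ≤ 2 ^ 3 := by gcongr
    have j4 : |j| ^ 4 ≤ 2 ^ 4 := by gcongr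
    have q1 : |a * (j * h)| ≤ |a| * (2 * h) := by
      rw [abs_mul, abs_mul, abs_of_pos h0]; gcongr
    have q2 : |b * (j * h) ^ 2 / 2| ≤ |b| * (2 ^ 2 * h) / 2 := by
      rw [abs_div, abs_mul, abs_pow, abs_mul, abs_of_pos h0, mul_pow, abs_of_pos (show (0 : ℝ) < 2 by norm_num)]; gcongr
    have q3 : |c * (j * h) ^ 3 / 6| ≤ |c| * (2 ^ 3 * h) / 6 := by
      rw [abs_div, abs_mul, abs_pow, abs_mul, abs_of_pos h0, mul_pow,
        abs_of_pos (show (0 : ℝ) < 6 by norm_num)]; gcongr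
    have q4 : |d * (j * h) ^ 4 / 24| ≤ |d| * (2 ^ 4 * h) / 24 := by
      rw [abs_div, abs_mul, abs_pow, abs_mul, abs_of_pos h0, mul_pow,
        abs_of_pos (show (0 : ℝ) < 24 by norm_num)]; gcongr
    have q5 : |r| ≤ K * h := hr.trans (by gcongr)
    have w1 := abs_add_le (a * (j * h) + b * (j * h) ^ 2 / 2 + c * (j * h) ^ 3 / 6 + d * (j * h) ^ 4 / 24) r
    have w2 := abs_add_le (a * (j * h) + b * (j * h) ^ 2 / 2 + c * (j * h) ^ 3 / 6) (d * (j * h) ^ 4 / 24)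
    have w3 := abs_add_le (a * (j * h) + b * (j * h) ^ 2 / 2) (c * (j * h) ^ 3 / 6)
    have w4 := abs_add_le (a * (j * h)) (b * (j * h) ^ 2 / 2)
    have z1 : 0 ≤ |c| * h := by positivity
    have z2 : 0 ≤ |d| * h := by positivity
    have z3 : 0 ≤ K * h := by positivity
    rw [hS]
    linarith
  have g1 : |G₁| ≤ 2 * S * h := by
    have := size (-1) r1 (by norm_num) hG1
    rw [hr1]; convert this using 2; ring
  have g2 : |G₂| ≤ 2 * S * h := by
    have := size (-2) r2 (by norm_num) hG2
    rw [hr2]; exact this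
  have g3 : |G₃| ≤ 2 * S * h := by
    have := size 1 r3 (by norm_num) hG3
    rw [hr3]; convert this using 2; ring
  have v1 : |V₁| ≤ 4 * S * h := by rw [hV1]; linarith [abs_sub G₁ G₂]
  have v2 : |V₂| ≤ 4 * S * h := by
    have := mul_nonneg hS0 h0.le
    rw [hV2, abs_neg]; linarith
  have v3 : |V₃| ≤ 4 * S * h := by rw [hV3]; linarith [abs_sub G₃ G₂]
  have key : h * (A - a - h ^ 3 * (L * b + d / 12)) =
      (e1 * V₁ + e2 * V₂ + e3 * V₃)
      + (-r1 + r2 / 6 + r3 / 3) + L * h ^ 2 * (r2 / 3 + 2 / 3 * r3)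
      + L * h ^ 5 * (-c / 3 + d * h / 4) := by
    have : h * (A - a - h ^ 3 * (L * b + d / 12)) = h * A - h * a - h ^ 4 * (L * b + d / 12) := by ring
    rw [this, hA, he1, he2, he3]
    have : (-1 + e1) * V₁ + (1 / 2 - L * h ^ 2 + e2) * V₂ + (1 / 3 + 2 / 3 * (L * h ^ 2) + e3) * V₃
      = (e1 * V₁ + e2 * V₂ + e3 * V₃) + (-1 * V₁ + (1 / 2 - L * h ^ 2) * V₂ + (1 / 3 + 2 / 3 * (L * h ^ 2)) * V₃) := by ring
    rw [this]
    have : (-1 * V₁ + (1 / 2 - L * h ^ 2) * V₂ + (1 / 3 + 2 / 3 * (L * h ^ 2)) * V₃) - h * a - h ^ 4 * (L * b + d / 12) = (-r1 + r2 / 6 + r3 / 3) + L * h ^ 2 * (r2 / 3 + 2 / 3 * r3)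
      + L * h ^ 5 * (-c / 3 + d * h / 4) := by
      rw [hV1, hV2, hV3, hr1, hr2, hr3]; ring
    linarith
  have ev : ∀ e V, |e| ≤ 400 * (L * h ^ 2) ^ 2 → |V| ≤ 4 * S * h →
      |e * V| ≤ 1600 * L ^ 2 * S * h ^ 5 := by
    intro e V he hV
    rw [abs_mul]
    calc |e| * |V| ≤ (400 * (L * h ^ 2) ^ 2) * (4 * S * h) := by gcongr
      _ = _ := by ring
  have m1 := ev e1 V₁ hD1 v1
  have m2 := ev e2 V₂ hD2 v2
  have m3 := ev e3 V₃ hD3 v3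
  have m4 : |-r1 + r2 / 6 + r3 / 3| ≤ 2 * K * h ^ 5 := by
    rw [abs_le] at *
    constructor <;> linarith
  have m5 : |L * h ^ 2 * (r2 / 3 + 2 / 3 * r3)| ≤ |L| * (1 * (K * h ^ 5)) := by
    rw [mul_assoc, abs_mul, abs_mul, abs_of_pos (show 0 < h ^ 2 by positivity)]
    gcongr
    · linarith
    · rw [abs_le] at *
      constructor <;> linarith
  have m6 : |L * h ^ 5 * (-c / 3 + d * h / 4)| ≤ |L| * h ^ 5 * (|c| + |d|) := by
    rw [abs_mul, abs_mul, abs_of_pos (show 0 < h ^ 5 by positivity)]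
    gcongr
    have := abs_add_le (-c / 3) (d * h / 4)
    rw [abs_div, abs_div, abs_mul, abs_neg, abs_of_pos h0, abs_of_pos (show (0 : ℝ) < 3 by norm_num), abs_of_pos (show (0 : ℝ) < 4 by norm_num)] at this
    have : |d| * h ≤ |d| * 1 := by gcongr
    linarith [abs_nonneg c, abs_nonneg d]
  have fin : |h * (A - a - h ^ 3 * (L * b + d / 12))| ≤
      (10 * (1 + |L|) * K + |L| * (|c| + |d|) + 10000 * L ^ 2 * S) * h ^ 5 := by
    rw [key]
    have w1 := abs_add_le ((e1 * V₁ + e2 * V₂ + e3 * V₃)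
      + (-r1 + r2 / 6 + r3 / 3) + L * h ^ 2 * (r2 / 3 + 2 / 3 * r3)) (L * h ^ 5 * (-c / 3 + d * h / 4))
    have w2 := abs_add_le ((e1 * V₁ + e2 * V₂ + e3 * V₃)
      + (-r1 + r2 / 6 + r3 / 3)) (L * h ^ 2 * (r2 / 3 + 2 / 3 * r3))
    have w3 := abs_add_le (e1 * V₁ + e2 * V₂ + e3 * V₃) (-r1 + r2 / 6 + r3 / 3)
    have w4 := abs_add_le (e1 * V₁ + e2 * V₂) (e3 * V₃)
    have w5 := abs_add_le (e1 * V₁) (e2 * V₂)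
    have z1 : 0 ≤ L ^ 2 * S * h ^ 5 := by positivity
    have z2 : 0 ≤ |L| * K * h ^ 5 := by positivity
    have z3 : 0 ≤ K * h ^ 5 := by positivity
    linarith
  rw [abs_mul, abs_of_pos h0] at fin
  refine le_of_mul_le_mul_left (fin.trans (le_of_eq ?_)) h0
  ring

lemma zero_of_le (a K δ : ℝ) (hδ : 0 < δ) (h : ∀ y, 0 < y → y < δ → |a| ≤ K * y) : a = 0 := by
  have hl : Filter.Tendsto (fun y : ℝ => K * y) (nhdsWithin 0 (Set.Ioi 0)) (nhds 0) := by
    have : Filter.Tendsto (fun y : ℝ => K * y) (nhds 0) (nhds (K * 0)) :=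
      (continuous_const.mul continuous_id).tendsto 0
    rw [mul_zero] at this
    exact this.mono_left nhdsWithin_le_nhds
  have : |a| ≤ 0 := by
    refine ge_of_tendsto hl ?_
    filter_upwards [Ioo_mem_nhdsGT hδ] with y hy using h y hy.1 hy.2
  exact abs_nonpos_iff.1 this


/-- Three-point Gaussian-RBF primitive-function reconstruction (Theorem A.1, N = 3):
the coefficients `α dx` interpolate the primitive `U` at the four interfaces
`x₀ + ℓ·dx`, `ℓ = -2,…,1`, with Gaussian basis `φ(t) = exp(-λ²t²)`, and the
reconstruction is `A dx = Σ_k α dx k · φ'(x₀ - p k)`. -/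
theorem stmt_9 (u : ℝ → ℝ) (x₀ ε : ℝ) (hε : 0 < ε)
    (hu : ContDiffOn ℝ 4 u (Metric.ball x₀ ε)) (hu' : deriv u x₀ ≠ 0) (lam : ℝ)
    (U : ℝ → ℝ → ℝ) (hU : ∀ dx x, U dx x = ∫ ξ in (x₀ - 2 * dx)..x, u ξ)
    (p : ℝ → Fin 4 → ℝ) (hp : ∀ dx k, p dx k = x₀ + ((k : ℤ) - 2 : ℤ) * dx)
    (α : ℝ → Fin 4 → ℝ)
    (hα : ∀ dx, 0 < dx → ∀ i,
      ∑ k, α dx k * Real.exp (-lam ^ 2 * (p dx i - p dx k) ^ 2) = U dx (p dx i))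
    (A : ℝ → ℝ)
    (hA : ∀ dx, A dx =
      ∑ k, α dx k * (-2 * lam ^ 2 * (x₀ - p dx k) *
        Real.exp (-lam ^ 2 * (x₀ - p dx k) ^ 2))) :
    (∃ C > 0, ∃ δ > 0, ∀ dx : ℝ, 0 < dx → dx < δ →
      |A dx - u x₀ - dx ^ 3 * (lam ^ 2 * deriv u x₀ + iteratedDeriv 3 u x₀ / 12)|
        ≤ C * dx ^ 4) ∧
    (lam ^ 2 = -iteratedDeriv 3 u x₀ / (12 * deriv u x₀) →
      ∃ C > 0, ∃ δ > 0, ∀ dx : ℝ, 0 < dx → dx < δ →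
        |A dx - u x₀| ≤ C * dx ^ 4) := by
  obtain ⟨K, hK, δ, hδ, c, hG⟩ := prim_expand u x₀ ε hε hu
  have hUj : ∀ h, 0 < h → 2 * h < δ → ∀ y, |y| < δ →
      U h (x₀ + y) = (∫ ξ in x₀..(x₀ + y), u ξ) - ∫ ξ in x₀..(x₀ + (-2 * h)), u ξ := by
    intro h h0 hd y hy
    have i2 := (hG (-2 * h) (by rw [abs_lt]; constructor <;> linarith)).1
    rw [hU, show x₀ - 2 * h = x₀ + (-2 * h) by ring]
    exact (integral_interval_sub_left (hG y hy).1 i2).symm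
  have hp0 : ∀ h, p h 0 = x₀ + (-2 * h) := by intro h; rw [hp]; norm_num
  have hp1 : ∀ h, p h 1 = x₀ + (-h) := by intro h; rw [hp]; norm_num
  have hp2 : ∀ h, p h 2 = x₀ + 0 := by intro h; rw [hp]; norm_num
  have hp3 : ∀ h, p h 3 = x₀ + h := by intro h; rw [hp]; norm_num
  have main : ∃ C > 0, ∃ δ > 0, ∀ dx : ℝ, 0 < dx → dx < δ →
      |A dx - u x₀ - dx ^ 3 * (lam ^ 2 * deriv u x₀ + iteratedDeriv 3 u x₀ / 12)|
        ≤ C * dx ^ 4 := by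
    by_cases hl : lam = 0
    · exfalso
      have hz : ∀ y, 0 < y → y < δ / 2 → ∫ ξ in x₀..(x₀ + y), u ξ = 0 := by
        intro y y0 yd
        have e2 := hα y y0 2
        have e3 := hα y y0 3
        simp only [hl, ne_eq, OfNat.ofNat_ne_zero, not_false_eq_true, zero_pow, neg_zero,
          zero_mul, Real.exp_zero] at e2 e3
        rw [e2, hp2, hp3, hUj y y0 (by linarith) 0 (by simpa using hδ),
          hUj y y0 (by linarith) y (by rw [abs_of_pos y0]; linarith)] at e3
        simp at e3
        linarith
      set a := u x₀
      set b := deriv u x₀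
      set d := iteratedDeriv 3 u x₀
      have hz2 : ∀ y, 0 < y → y < min (δ / 2) 1 →
          |a + b * y / 2| ≤ (|c| + |d| + K) * y ^ 2 := by
        intro y y0 yd
        have y1 : y < 1 := lt_of_lt_of_le yd (min_le_right _ _)
        have y2 : y < δ / 2 := lt_of_lt_of_le yd (min_le_left _ _)
        have := (hG y (by rw [abs_of_pos y0]; linarith)).2
        rw [hz y y0 y2, abs_of_pos y0] at this
        refine le_of_mul_le_mul_left ?_ y0
        rw [← abs_of_pos y0, ← abs_mul, abs_of_pos y0]
        have e : y * (a + b * y / 2) = -(c * y ^ 3 / 6) + -(d * y ^ 4 / 24) - (0 - (a * y + b * y ^ 2 / 2 + c * y ^ 3 / 6 + d * y ^ 4 / 24)) := by ring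
        rw [e]
        have w1 := abs_sub (-(c * y ^ 3 / 6) + -(d * y ^ 4 / 24)) (0 - (a * y + b * y ^ 2 / 2 + c * y ^ 3 / 6 + d * y ^ 4 / 24))
        have w2 := abs_add_le (-(c * y ^ 3 / 6)) (-(d * y ^ 4 / 24))
        have q1 : |-(c * y ^ 3 / 6)| = |c| * y ^ 3 / 6 := by
          rw [abs_neg, abs_div, abs_mul, abs_pow, abs_of_pos y0]; norm_num
        have q2 : |-(d * y ^ 4 / 24)| = |d| * y ^ 4 / 24 := by
          rw [abs_neg, abs_div, abs_mul, abs_pow, abs_of_pos y0]; norm_num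
        have y4 : y ^ 4 ≤ y ^ 3 := pow_le_pow_of_le_one y0.le y1.le (by norm_num)
        have y5 : y ^ 5 ≤ y ^ 3 := pow_le_pow_of_le_one y0.le y1.le (by norm_num)
        have r1 : K * y ^ 5 ≤ K * y ^ 3 := by gcongr
        have r2 : |d| * y ^ 4 ≤ |d| * y ^ 3 := by gcongr
        have r3 : 0 ≤ |c| * y ^ 3 := by positivity
        have r4 : 0 ≤ |d| * y ^ 3 := by positivity
        nlinarith
      have hm : 0 < min (δ / 2) 1 := lt_min (by linarith) one_pos
      have ha : a = 0 := by
        refine zero_of_le a (|c| + |d| + K + |b|) _ hm (fun y y0 yd => ?_)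
        have y1 : y < 1 := lt_of_lt_of_le yd (min_le_right _ _)
        have := hz2 y y0 yd
        have w := abs_sub (a + b * y / 2) (b * y / 2)
        rw [add_sub_cancel_right] at w
        have q : |b * y / 2| = |b| * y / 2 := by
          rw [abs_div, abs_mul, abs_of_pos y0]; norm_num
        have r : (|c| + |d| + K) * y ^ 2 ≤ (|c| + |d| + K) * y := by
          gcongr; nlinarith
        have : 0 ≤ |b| * y := by positivity
        linarith
      refine hu' (zero_of_le b (2 * (|c| + |d| + K)) _ hm (fun y y0 yd => ?_))
      have := hz2 y y0 yd
      rw [ha, zero_add, abs_div, abs_mul, abs_of_pos y0, abs_of_pos (show (0 : ℝ) < 2 by norm_num)] at this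
      refine le_of_mul_le_mul_right ?_ y0
      linarith
    · have hL : 0 < lam ^ 2 := by positivity
      set L := lam ^ 2 with hLdef
      refine ⟨10 * (1 + |L|) * (32 * K) + |L| * (|c| + |iteratedDeriv 3 u x₀|)
        + 10000 * L ^ 2 * (|u x₀| + |deriv u x₀| + |c| + |iteratedDeriv 3 u x₀| + 32 * K),
        by positivity, min (δ / 2) (min 1 (1 / (6 * L))), ?_, ?_⟩
      · exact lt_min (by linarith) (lt_min one_pos (by positivity))
      intro h h0 hd
      have hd1 : h < δ / 2 := lt_of_lt_of_le hd (min_le_left _ _)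
      have hd2 : h < 1 := lt_of_lt_of_le hd ((min_le_right _ _).trans (min_le_left _ _))
      have hd3 : h < 1 / (6 * L) := lt_of_lt_of_le hd ((min_le_right _ _).trans (min_le_right _ _))
      have ht : 0 < L * h ^ 2 := by positivity
      have ht6 : L * h ^ 2 ≤ 1 / 6 := by
        have : L * h ≤ 1 / 6 := by
          rw [lt_div_iff₀ (by positivity)] at hd3
          linarith
        nlinarith [mul_pos hL h0]
      have b1 : |-h| < δ := by rw [abs_neg, abs_of_pos h0]; linarith
      have b2 : |-2 * h| < δ := by rw [abs_lt]; constructor <;> linarith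
      have b3 : |h| < δ := by rw [abs_of_pos h0]; linarith
      have b0 : |(0 : ℝ)| < δ := by simpa using hδ
      have hd' : 2 * h < δ := by linarith
      have k5 : 0 < K * h ^ 5 := by positivity
      have hG1 := (hG (-h) b1).2
      have hG2 := (hG (-2 * h) b2).2
      have hG3 := (hG h b3).2
      rw [abs_neg, abs_of_pos h0] at hG1
      rw [abs_of_pos h0] at hG3
      rw [show |-2 * h| = 2 * h by rw [abs_mul, abs_of_pos h0]; norm_num] at hG2
      have e0 := hα h h0 0
      have e1 := hα h h0 1
      have e2 := hα h h0 2
      have e3 := hα h h0 3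
      simp only [Fin.sum_univ_four, hp0, hp1, hp2, hp3] at e0 e1 e2 e3
      rw [hUj h h0 hd' _ b2, sub_self] at e0
      rw [hUj h h0 hd' _ b1] at e1
      rw [hUj h h0 hd' _ b0] at e2
      rw [hUj h h0 hd' _ b3] at e3
      have hAh := hA h
      simp only [Fin.sum_univ_four, hp0, hp1, hp2, hp3] at hAh
      rw [add_zero, integral_same, zero_sub] at e2
      generalize (∫ ξ in x₀..(x₀ + (-h)), u ξ) = I₁ at hG1 e1
      generalize (∫ ξ in x₀..(x₀ + (-2 * h)), u ξ) = I₂ at hG2 e1 e2 e3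
      generalize (∫ ξ in x₀..(x₀ + h), u ξ) = I₃ at hG3 e3
      ring_nf at e0 e1 e2 e3 hAh
      simp only [Real.exp_zero] at e0 e1 e2 e3
      have hel := elim (L * h ^ 2) ht (α h 0) (α h 1) (α h 2) (α h 3)
        (I₁ - I₂) (-I₂) (I₃ - I₂)
        (by ring_nf; linarith [e0])
        (by ring_nf; linarith [e1])
        (by ring_nf; linarith [e2])
        (by ring_nf; linarith [e3])
      refine assemble (u x₀) (deriv u x₀) c (iteratedDeriv 3 u x₀) L h (A h) _ _ _ _ _ _
        _ _ _ (32 * K) h0 hd2.le (by positivity) (hG1.trans (by linarith))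
        (hG2.trans (by rw [mul_pow]; linarith)) (hG3.trans (by linarith))
        rfl rfl rfl ?_ ?_ ?_ (Eq.trans ?_ hel)
      · have := prod_bound _ _ _ ht ht6 (Or.inl rfl) (Or.inl rfl)
        rw [← abs_neg]
        convert this using 2
        ring
      · have := bern_bound (4 * (L * h ^ 2)) (by positivity) (by linarith)
        rw [show ∀ z : ℝ, z / 2 - (1 / 2 - L * h ^ 2) = (z - (1 - 4 * (L * h ^ 2) / 2)) / 2 by
          intro z; ring, abs_div, abs_of_pos (show (0 : ℝ) < 2 by norm_num)]
        have hsq := sq_nonneg (L * h ^ 2)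
        linarith
      · have := prod_bound _ _ _ ht ht6 (Or.inr rfl) (Or.inr rfl)
        rw [show ∀ z : ℝ, z / 3 - (1 / 3 + 2 / 3 * (L * h ^ 2))
          = (z - (1 + (5 * (L * h ^ 2) - 6 * (L * h ^ 2) / 2))) / 3 by
          intro z; ring, abs_div, abs_of_pos (show (0 : ℝ) < 3 by norm_num)]
        have hsq := sq_nonneg (L * h ^ 2)
        linarith
      · rw [hAh]; ring_nf
  refine ⟨main, fun hlam => ?_⟩
  obtain ⟨C, hC, δ', hδ', hm⟩ := main
  refine ⟨C, hC, δ', hδ', fun h h0 hd => ?_⟩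
  have := hm h h0 hd
  rw [hlam] at this
  have e : -iteratedDeriv 3 u x₀ / (12 * deriv u x₀) * deriv u x₀ + iteratedDeriv 3 u x₀ / 12
      = 0 := by
    field_simp
    ring
  rwa [e, mul_zero, sub_zero] at this
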